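/- Let n ≥ 1, c > 0, 0 < η ≤ c/(48n), and let q_{i,c}(x) = q^c_{i,η}(ηx) be the rescaled frequency-truncated approximation of q_i(x) = Q_i(x)e^{−‖x‖²/2}. Then ‖q_{i,c} − q_i(η·)‖_{L^∞(ℝⁿ)} ≤ 36 e^{−72n²} and for every k, ‖∂_k q_{i,c} − η (∂_k q_i)(η·)‖_{L^∞(ℝⁿ)} ≤ 36 η e^{−72n²}. -/

import Mathlib

open scoped RealInnerProductSpace

noncomputable section

/-- The Fourier transform with the convention `F(f)(ξ) = ∫ e^{-i⟨x,ξ⟩} f(x) dx`. -/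
def Fn {n : ℕ} (f : EuclideanSpace ℝ (Fin n) → ℂ) (ξ : EuclideanSpace ℝ (Fin n)) : ℂ :=
  ∫ x : EuclideanSpace ℝ (Fin n), Complex.exp (-Complex.I * (⟪x, ξ⟫ : ℝ)) * f x

/-!
The error `δ` of truncating `f(x) = p(x) e^{-‖x‖²/2}` in frequency is `F⁻¹((m - 1) F f)`, where the
multiplier `m` equals `1` on a ball of radius `R`. So `δ` and its gradient are bounded by the
integral of `(1 + ‖ξ‖) |F f(ξ)|` over `‖ξ‖ > R`. The transform `F f` is a sum of products of
one-dimensional ones, and each of these is `e^{-t²/2}` times at most a power of `|t| + √(deg p)`.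
Bounding the polynomial growth by `e^{‖ξ‖}`, half of the Gaussian exponent turns it into a factor of
order `e^{R - R²/4}` and the other half makes the integral converge. For the quartic polynomial
`Q_i` and `R = c / (2η) ≥ 24n`, the term `R² / 4 ≥ 144 n²` beats all the other constants.
-/

open MeasureTheory MvPolynomial
open scoped Nat FourierTransform

section FourierTransform

variable {n : ℕ}

/-- The pairing `(x, ξ) ↦ ⟪x, ξ⟫ / 2π`, for which Mathlib's `VectorFourier.fourierIntegral 𝐞`,
normalized as `∫ e^{-2πi L(x, ξ)} f(x) dx`, becomes `Fn`. -/
def FnPairing (n : ℕ) :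
    EuclideanSpace ℝ (Fin n) →L[ℝ] EuclideanSpace ℝ (Fin n) →L[ℝ] ℝ :=
  (2 * Real.pi)⁻¹ • innerSL ℝ

theorem norm_FnPairing_le : ‖FnPairing n‖ ≤ (2 * Real.pi)⁻¹ := by
  refine (ContinuousLinearMap.opNorm_smul_le _ _).trans ?_
  rw [Real.norm_of_nonneg (by positivity)]
  exact mul_le_of_le_one_right (by positivity) (norm_innerSL_le ℝ)

theorem continuous_FnPairing :
    Continuous fun p : EuclideanSpace ℝ (Fin n) × EuclideanSpace ℝ (Fin n) ↦
      (FnPairing n).toLinearMap₁₂ p.1 p.2 :=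
  (FnPairing n).continuous₂

theorem fourierChar_FnPairing (x ξ : EuclideanSpace ℝ (Fin n)) :
    (Real.fourierChar (-(FnPairing n).toLinearMap₁₂ x ξ) : ℂ) =
      Complex.exp (-Complex.I * (⟪x, ξ⟫ : ℝ)) := by
  have hpair : (FnPairing n).toLinearMap₁₂ x ξ = (2 * Real.pi)⁻¹ * ⟪x, ξ⟫ := rfl
  rw [hpair, Real.fourierChar_apply]
  congr 1
  push_cast
  field_simp

theorem Fn_eq_fourierIntegral (f : EuclideanSpace ℝ (Fin n) → ℂ) :
    Fn f = VectorFourier.fourierIntegral Real.fourierChar volume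
      (FnPairing n).toLinearMap₁₂ f := by
  ext ξ
  simp only [Fn, VectorFourier.fourierIntegral, Circle.smul_def, fourierChar_FnPairing,
    smul_eq_mul]

theorem integrable_exp_inner_mul {f : EuclideanSpace ℝ (Fin n) → ℂ} (hf : Integrable f)
    (ξ : EuclideanSpace ℝ (Fin n)) :
    Integrable fun x ↦ Complex.exp (-Complex.I * (⟪x, ξ⟫ : ℝ)) * f x := by
  simpa only [Circle.smul_def, fourierChar_FnPairing, smul_eq_mul] using
    (VectorFourier.fourierIntegral_convergent_iff Real.continuous_fourierChar
      continuous_FnPairing ξ).2 hf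

theorem Fn_add {f g : EuclideanSpace ℝ (Fin n) → ℂ} (hf : Integrable f) (hg : Integrable g) :
    Fn (f + g) = Fn f + Fn g := by
  simp only [Fn_eq_fourierIntegral]
  exact VectorFourier.fourierIntegral_add Real.continuous_fourierChar continuous_FnPairing hf hg

theorem continuous_Fn {f : EuclideanSpace ℝ (Fin n) → ℂ} (hf : Integrable f) :
    Continuous (Fn f) := by
  rw [Fn_eq_fourierIntegral]
  exact VectorFourier.fourierIntegral_continuous Real.continuous_fourierChar
    continuous_FnPairing hf

theorem norm_Fn_le (f : EuclideanSpace ℝ (Fin n) → ℂ) (ξ : EuclideanSpace ℝ (Fin n)) :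
    ‖Fn f ξ‖ ≤ ∫ x, ‖f x‖ := by
  rw [Fn_eq_fourierIntegral]
  exact VectorFourier.norm_fourierIntegral_le_integral_norm ..

theorem differentiable_Fn {f : EuclideanSpace ℝ (Fin n) → ℂ} (hf : Integrable f)
    (hf' : Integrable fun x ↦ ‖x‖ * ‖f x‖) : Differentiable ℝ (Fn f) := by
  rw [Fn_eq_fourierIntegral]
  exact VectorFourier.differentiable_fourierIntegral _ hf hf'

theorem norm_fderiv_Fn_le {f : EuclideanSpace ℝ (Fin n) → ℂ} (hf : Integrable f)
    (hf' : Integrable fun x ↦ ‖x‖ * ‖f x‖) (ξ : EuclideanSpace ℝ (Fin n)) :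
    ‖fderiv ℝ (Fn f) ξ‖ ≤ ∫ x, ‖x‖ * ‖f x‖ := by
  rw [Fn_eq_fourierIntegral, VectorFourier.fderiv_fourierIntegral _ hf hf']
  refine (VectorFourier.norm_fourierIntegral_le_integral_norm ..).trans
    (integral_mono_of_nonneg (.of_forall fun _ ↦ norm_nonneg _) hf' (.of_forall fun x ↦ ?_))
  calc ‖VectorFourier.fourierSMulRight (FnPairing n) f x‖
      ≤ 2 * Real.pi * ‖FnPairing n‖ * ‖x‖ * ‖f x‖ := VectorFourier.norm_fourierSMulRight_le ..
    _ ≤ 2 * Real.pi * (2 * Real.pi)⁻¹ * ‖x‖ * ‖f x‖ := by gcongr; exact norm_FnPairing_le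
    _ = ‖x‖ * ‖f x‖ := by field_simp

theorem fourier_eq_Fn_smul (f : EuclideanSpace ℝ (Fin n) → ℂ) (w : EuclideanSpace ℝ (Fin n)) :
    𝓕 f w = Fn f ((2 * Real.pi) • w) := by
  rw [Real.fourier_eq', Fn]
  congr with x
  rw [smul_eq_mul, real_inner_smul_right]
  congr 2
  push_cast
  ring

/-- The inverse of the Fourier transform `Fn`,
`F⁻¹(g)(z) = (2π)⁻ⁿ ∫ e^{i⟨z,ξ⟩} g(ξ) dξ`. -/
def FnInv (g : EuclideanSpace ℝ (Fin n) → ℂ) (z : EuclideanSpace ℝ (Fin n)) : ℂ :=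
  (1 / (2 * Real.pi) ^ n) *
    ∫ ξ : EuclideanSpace ℝ (Fin n), g ξ * Complex.exp (Complex.I * (⟪z, ξ⟫ : ℝ))

theorem FnInv_eq_Fn_neg (g : EuclideanSpace ℝ (Fin n) → ℂ) :
    FnInv g = fun z ↦ (((2 * Real.pi) ^ n)⁻¹ : ℝ) • Fn g (-z) := by
  ext z
  simp only [FnInv, Fn, inner_neg_right, real_inner_comm z, Complex.ofReal_neg, neg_mul_neg,
    mul_comm (g _), Complex.real_smul, one_div]
  push_cast
  rfl

theorem FnInv_add {g h : EuclideanSpace ℝ (Fin n) → ℂ} (hg : Integrable g) (hh : Integrable h) :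
    FnInv (g + h) = FnInv g + FnInv h := by
  ext z
  simp only [FnInv_eq_Fn_neg, Fn_add hg hh, Pi.add_apply, smul_add]

theorem FnInv_Fn {f : EuclideanSpace ℝ (Fin n) → ℂ} (hc : Continuous f) (hf : Integrable f)
    (hF : Integrable (Fn f)) : FnInv (Fn f) = f := by
  have hF' : Integrable (𝓕 f) := by
    simp only [funext (fourier_eq_Fn_smul f)]
    exact hF.comp_smul (by positivity)
  ext z
  calc FnInv (Fn f) z
      = ∫ w, Fn f ((2 * Real.pi) • w) *
          Complex.exp (Complex.I * (⟪z, (2 * Real.pi) • w⟫ : ℝ)) := by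
        rw [FnInv, Measure.integral_comp_smul volume
          (fun ξ ↦ Fn f ξ * Complex.exp (Complex.I * (⟪z, ξ⟫ : ℝ))), finrank_euclideanSpace,
          Fintype.card_fin, abs_of_nonneg (by positivity), Complex.real_smul, one_div]
        push_cast
        rfl
    _ = 𝓕⁻ (𝓕 f) z := by
        rw [Real.fourierInv_eq']
        congr with w
        rw [fourier_eq_Fn_smul, smul_eq_mul, real_inner_smul_right, real_inner_comm, mul_comm]
        congr 2
        push_cast
        ring
    _ = f z := congrFun (hc.fourierInv_fourier_eq hf hF') z

theorem FnInv_mul_Fn {f m : EuclideanSpace ℝ (Fin n) → ℂ} (hc : Continuous f)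
    (hf : Integrable f) (hF : Integrable (Fn f))
    (hm : Integrable fun ξ ↦ (m ξ - 1) * Fn f ξ) :
    FnInv (fun ξ ↦ m ξ * Fn f ξ) = f + FnInv fun ξ ↦ (m ξ - 1) * Fn f ξ := by
  have hsplit : (fun ξ ↦ m ξ * Fn f ξ) = Fn f + fun ξ ↦ (m ξ - 1) * Fn f ξ := by
    ext ξ
    simp only [Pi.add_apply]
    ring
  rw [hsplit, FnInv_add hF hm, FnInv_Fn hc hf hF]

theorem norm_FnInv_le (g : EuclideanSpace ℝ (Fin n) → ℂ) (z : EuclideanSpace ℝ (Fin n)) :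
    ‖FnInv g z‖ ≤ ((2 * Real.pi) ^ n)⁻¹ * ∫ ξ, ‖g ξ‖ := by
  rw [FnInv_eq_Fn_neg, norm_smul, Real.norm_of_nonneg (by positivity)]
  gcongr
  exact norm_Fn_le g _

theorem differentiable_FnInv {g : EuclideanSpace ℝ (Fin n) → ℂ} (hg : Integrable g)
    (hg' : Integrable fun ξ ↦ ‖ξ‖ * ‖g ξ‖) : Differentiable ℝ (FnInv g) := by
  rw [FnInv_eq_Fn_neg]
  exact ((differentiable_Fn hg hg').comp differentiable_id.fun_neg).fun_const_smul
    (((2 * Real.pi) ^ n)⁻¹ : ℝ)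

theorem norm_fderiv_FnInv_le {g : EuclideanSpace ℝ (Fin n) → ℂ} (hg : Integrable g)
    (hg' : Integrable fun ξ ↦ ‖ξ‖ * ‖g ξ‖) (z : EuclideanSpace ℝ (Fin n)) :
    ‖fderiv ℝ (FnInv g) z‖ ≤ ((2 * Real.pi) ^ n)⁻¹ * ∫ ξ, ‖ξ‖ * ‖g ξ‖ := by
  have hd : DifferentiableAt ℝ (fun z ↦ Fn g (-z)) z :=
    (differentiable_Fn hg hg').comp differentiable_id.fun_neg z
  have hneg : fderiv ℝ (fun z ↦ Fn g (-z)) z = -fderiv ℝ (Fn g) (-z) := by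
    simpa only [neg_one_smul] using fderiv_comp_smul (𝕜 := ℝ) (f := Fn g) (x := z) (-1)
  rw [FnInv_eq_Fn_neg, fderiv_fun_const_smul hd, hneg, norm_smul, norm_neg,
    Real.norm_of_nonneg (by positivity)]
  gcongr
  exact norm_fderiv_Fn_le hg hg' _

theorem Fn_prod (f : Fin n → ℝ → ℂ) (ξ : EuclideanSpace ℝ (Fin n)) :
    Fn (fun x ↦ ∏ l, f l (x l)) ξ =
      ∏ l, ∫ x : ℝ, Complex.exp (-Complex.I * (x * ξ l : ℝ)) * f l x := by
  rw [← integral_fintype_prod_volume_eq_prod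
      (fun l x ↦ Complex.exp (-Complex.I * (x * ξ l : ℝ)) * f l x), Fn,
    ← (PiLp.volume_preserving_toLp (Fin n)).integral_comp
      (MeasurableEquiv.toLp 2 _).measurableEmbedding]
  congr with x
  rw [Finset.prod_mul_distrib, ← Complex.exp_sum, ← Finset.mul_sum]
  simp [PiLp.inner_apply, mul_comm]

end FourierTransform

section GaussianWeight

variable {n : ℕ} {g : EuclideanSpace ℝ (Fin n) → ℂ} {W : EuclideanSpace ℝ (Fin n) → ℝ}

theorem integrable_of_norm_mul_one_add_norm_le (hg : AEStronglyMeasurable g) (hW : Integrable W)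
    (h : ∀ ξ, ‖g ξ‖ * (1 + ‖ξ‖) ≤ W ξ) : Integrable g :=
  hW.mono' hg (.of_forall fun ξ ↦
    (le_mul_of_one_le_right (norm_nonneg _) (le_add_of_nonneg_right (norm_nonneg _))).trans (h ξ))

theorem integrable_norm_mul_of_norm_mul_one_add_norm_le (hg : AEStronglyMeasurable g)
    (hW : Integrable W) (h : ∀ ξ, ‖g ξ‖ * (1 + ‖ξ‖) ≤ W ξ) :
    Integrable fun ξ ↦ ‖ξ‖ * ‖g ξ‖ := by
  refine hW.mono' (continuous_norm.aestronglyMeasurable.mul hg.norm) (.of_forall fun ξ ↦ ?_)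
  rw [Real.norm_of_nonneg (by positivity)]
  linarith [h ξ, norm_nonneg (g ξ)]

theorem norm_FnInv_le_of_weight (hW : Integrable W) (h : ∀ ξ, ‖g ξ‖ * (1 + ‖ξ‖) ≤ W ξ)
    (z : EuclideanSpace ℝ (Fin n)) :
    ‖FnInv g z‖ ≤ ((2 * Real.pi) ^ n)⁻¹ * ∫ ξ, W ξ := by
  refine (norm_FnInv_le g z).trans (mul_le_mul_of_nonneg_left ?_ (by positivity))
  refine integral_mono_of_nonneg (.of_forall fun ξ ↦ norm_nonneg _) hW (.of_forall fun ξ ↦ ?_)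
  exact (le_mul_of_one_le_right (norm_nonneg _)
    (le_add_of_nonneg_right (norm_nonneg _))).trans (h ξ)

theorem norm_fderiv_FnInv_le_of_weight (hg : AEStronglyMeasurable g) (hW : Integrable W)
    (h : ∀ ξ, ‖g ξ‖ * (1 + ‖ξ‖) ≤ W ξ) (z : EuclideanSpace ℝ (Fin n)) :
    ‖fderiv ℝ (FnInv g) z‖ ≤ ((2 * Real.pi) ^ n)⁻¹ * ∫ ξ, W ξ := by
  have hg' := integrable_norm_mul_of_norm_mul_one_add_norm_le hg hW h
  refine (norm_fderiv_FnInv_le (integrable_of_norm_mul_one_add_norm_le hg hW h) hg' z).trans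
    (mul_le_mul_of_nonneg_left ?_ (by positivity))
  refine integral_mono hg' hW fun ξ ↦ ?_
  linarith [h ξ, norm_nonneg (g ξ)]

theorem integrable_exp_neg_mul_sq_norm {V : Type*} [NormedAddCommGroup V]
    [InnerProductSpace ℝ V] [FiniteDimensional ℝ V] [MeasurableSpace V] [BorelSpace V] {b : ℝ}
    (hb : 0 < b) : Integrable fun v : V ↦ Real.exp (-b * ‖v‖ ^ 2) := by
  have h := GaussianFourier.integrable_cexp_neg_mul_sq_norm_add (V := V) (b := b)
    (by simpa using hb) 0 0
  refine h.norm.congr (.of_forall fun v ↦ ?_)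
  simp [Complex.norm_exp, ← Complex.ofReal_pow]

theorem integral_exp_neg_quarter_sq_norm (n : ℕ) :
    ∫ ξ : EuclideanSpace ℝ (Fin n), Real.exp (-(1 / 4) * ‖ξ‖ ^ 2) =
      √2 ^ n * √(2 * Real.pi) ^ n := by
  rw [GaussianFourier.integral_rexp_neg_mul_sq_norm (by norm_num), ← mul_pow,
    ← Real.sqrt_mul zero_le_two, finrank_euclideanSpace, Fintype.card_fin, Real.sqrt_eq_rpow,
    ← Real.rpow_natCast, ← Real.rpow_mul (by positivity)]
  congr 1 <;> ring

end GaussianWeight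

section GaussianMoment

theorem integrable_pow_mul_exp_neg_sq_div_two (k : ℕ) :
    Integrable fun x : ℝ ↦ x ^ k * Real.exp (-x ^ 2 / 2) := by
  have hk : (-1 : ℝ) < k := neg_one_lt_zero.trans_le k.cast_nonneg
  refine (integrable_rpow_mul_exp_neg_mul_sq one_half_pos hk).congr (.of_forall fun x ↦ ?_)
  simp only [Real.rpow_natCast]
  congr 2
  ring

/-- The integrand `e^{-ixt} x^k e^{-x²/2}` of `gaussianMoment`. -/
def gaussianMomentIntegrand (k : ℕ) (t x : ℝ) : ℂ :=
  Complex.exp (-Complex.I * (x * t : ℝ)) * (x ^ k * Real.exp (-x ^ 2 / 2) : ℝ)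

/-- The Fourier transform of the one-dimensional function `x^k e^{-x²/2}` at `t`. -/
def gaussianMoment (k : ℕ) (t : ℝ) : ℂ :=
  ∫ x : ℝ, gaussianMomentIntegrand k t x

theorem integrable_gaussianMomentIntegrand (k : ℕ) (t : ℝ) :
    Integrable (gaussianMomentIntegrand k t) := by
  refine (integrable_pow_mul_exp_neg_sq_div_two k).ofReal.bdd_mul (c := 1)
    (Continuous.aestronglyMeasurable (by fun_prop)) (.of_forall fun x ↦ ?_)
  simp [Complex.norm_exp]

theorem hasDerivAt_gaussianMomentIntegrand (k : ℕ) (t x : ℝ) :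
    HasDerivAt (gaussianMomentIntegrand k t)
      (k * gaussianMomentIntegrand (k - 1) t x - Complex.I * t * gaussianMomentIntegrand k t x -
        gaussianMomentIntegrand (k + 1) t x) x := by
  have hchar : HasDerivAt (fun x : ℝ ↦ Complex.exp (-Complex.I * (x * t : ℝ)))
      (Complex.exp (-Complex.I * (x * t : ℝ)) * (-Complex.I * (1 * t : ℝ))) x :=
    (((hasDerivAt_id x).mul_const t).ofReal_comp.const_mul (-Complex.I)).cexp
  have hexp : HasDerivAt (fun x : ℝ ↦ Real.exp (-x ^ 2 / 2))
      (Real.exp (-x ^ 2 / 2) * -x) x :=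
    ((hasDerivAt_pow 2 x).fun_neg.div_const 2).exp.congr_deriv (by push_cast; ring)
  refine (hchar.mul ((hasDerivAt_pow k x).fun_mul hexp).ofReal_comp).congr_deriv ?_
  simp only [gaussianMomentIntegrand]
  push_cast
  ring

theorem gaussianMoment_succ (k : ℕ) (t : ℝ) :
    gaussianMoment (k + 1) t =
      k * gaussianMoment (k - 1) t - Complex.I * t * gaussianMoment k t := by
  have hprev := (integrable_gaussianMomentIntegrand (k - 1) t).const_mul (k : ℂ)
  have hself := (integrable_gaussianMomentIntegrand k t).const_mul (Complex.I * t)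
  have hnext := integrable_gaussianMomentIntegrand (k + 1) t
  have hdiff : Integrable fun x ↦ k * gaussianMomentIntegrand (k - 1) t x -
      Complex.I * t * gaussianMomentIntegrand k t x := hprev.sub hself
  have hzero := integral_eq_zero_of_hasDerivAt_of_integrable
    (hasDerivAt_gaussianMomentIntegrand k t) (hdiff.sub hnext)
    (integrable_gaussianMomentIntegrand k t)
  rw [integral_sub hdiff hnext, integral_sub hprev hself, integral_const_mul,
    integral_const_mul] at hzero
  exact (sub_eq_zero.mp hzero).symm

theorem gaussianMoment_zero (t : ℝ) :
    gaussianMoment 0 t = (√(2 * Real.pi) * Real.exp (-t ^ 2 / 2) : ℝ) := by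
  have h := fourierIntegral_gaussian (b := ((1 / 2 : ℝ) : ℂ)) (by simp) (-(t : ℂ))
  have hmoment : gaussianMoment 0 t = ∫ x : ℝ, Complex.exp (Complex.I * -(t : ℂ) * x) *
      Complex.exp (-((1 / 2 : ℝ) : ℂ) * x ^ 2) := by
    unfold gaussianMoment gaussianMomentIntegrand
    congr with x
    push_cast
    rw [pow_zero, one_mul]
    congr 2 <;> ring
  rw [hmoment, h, Real.sqrt_eq_rpow]
  push_cast
  rw [Complex.ofReal_cpow (by positivity)]
  push_cast
  congr 2 <;> ring_nf

theorem norm_gaussianMoment_zero (t : ℝ) :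
    ‖gaussianMoment 0 t‖ = √(2 * Real.pi) * Real.exp (-t ^ 2 / 2) := by
  rw [gaussianMoment_zero, Complex.norm_of_nonneg (by positivity)]

theorem norm_gaussianMoment_succ_le (k : ℕ) (t : ℝ) :
    ‖gaussianMoment (k + 1) t‖ ≤
      k * ‖gaussianMoment (k - 1) t‖ + |t| * ‖gaussianMoment k t‖ := by
  rw [gaussianMoment_succ]
  refine (norm_sub_le _ _).trans_eq ?_
  simp only [norm_mul, Complex.norm_natCast, Complex.norm_I, one_mul, Complex.norm_real,
    Real.norm_eq_abs]

theorem norm_gaussianMoment_le {k N : ℕ} (hk : k ≤ N) (t : ℝ) :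
    ‖gaussianMoment k t‖ ≤ √(2 * Real.pi) * Real.exp (-t ^ 2 / 2) * (|t| + √N) ^ k := by
  -- The recurrence of `norm_gaussianMoment_succ_le` preserves the bound because
  -- `k + |t| M ≤ M²` for `M = |t| + √N` and `k ≤ N`; no formula for Hermite polynomials is needed.
  rw [← norm_gaussianMoment_zero]
  set M := |t| + √N
  have : 0 ≤ M := by positivity
  have hN : √N * √N = N := Real.mul_self_sqrt N.cast_nonneg
  induction k using Nat.twoStepInduction with
  | zero => simp
  | one =>
    calc ‖gaussianMoment 1 t‖ ≤ |t| * ‖gaussianMoment 0 t‖ := by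
          simpa using norm_gaussianMoment_succ_le 0 t
      _ ≤ M * ‖gaussianMoment 0 t‖ := by
          gcongr
          exact le_add_of_nonneg_right (Real.sqrt_nonneg _)
      _ = ‖gaussianMoment 0 t‖ * M ^ 1 := by ring
  | more k ih₀ ih₁ =>
    have hkN : (k + 1 : ℝ) ≤ N := by exact_mod_cast (Nat.le_succ _).trans hk
    have hstep : k + 1 + |t| * M ≤ M ^ 2 := by
      have : 0 ≤ |t| * √N := by positivity
      linear_combination hkN + this - hN
    calc ‖gaussianMoment (k + 2) t‖
        ≤ (k + 1) * ‖gaussianMoment k t‖ + |t| * ‖gaussianMoment (k + 1) t‖ := by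
          simpa using norm_gaussianMoment_succ_le (k + 1) t
      _ ≤ (k + 1) * (‖gaussianMoment 0 t‖ * M ^ k) +
            |t| * (‖gaussianMoment 0 t‖ * M ^ (k + 1)) := by
          gcongr
          · exact ih₀ (by omega)
          · exact ih₁ (by omega)
      _ = ‖gaussianMoment 0 t‖ * M ^ k * (k + 1 + |t| * M) := by ring
      _ ≤ ‖gaussianMoment 0 t‖ * M ^ k * M ^ 2 := by gcongr
      _ = ‖gaussianMoment 0 t‖ * M ^ (k + 2) := by ring

end GaussianMoment

section CoeffNorm

variable {σ ι : Type*}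

/-- The sum of the absolute values of the coefficients of a real polynomial. -/
def coeffNorm (p : MvPolynomial σ ℝ) : ℝ :=
  ∑ d ∈ p.support, |p.coeff d|

theorem coeffNorm_nonneg (p : MvPolynomial σ ℝ) : 0 ≤ coeffNorm p :=
  Finset.sum_nonneg fun _ _ ↦ abs_nonneg _

theorem coeffNorm_eq_sum_of_support_subset {p : MvPolynomial σ ℝ} {s : Finset (σ →₀ ℕ)}
    (hs : p.support ⊆ s) : coeffNorm p = ∑ d ∈ s, |p.coeff d| :=
  Finset.sum_subset hs fun d _ hd ↦ by rw [notMem_support_iff.mp hd, abs_zero]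

theorem coeffNorm_neg (p : MvPolynomial σ ℝ) : coeffNorm (-p) = coeffNorm p := by
  simp only [coeffNorm, support_neg, coeff_neg, abs_neg]

theorem coeffNorm_monomial (d : σ →₀ ℕ) (a : ℝ) : coeffNorm (monomial d a) = |a| := by
  classical
  rw [coeffNorm_eq_sum_of_support_subset support_monomial_subset, Finset.sum_singleton,
    coeff_monomial, if_pos rfl]

theorem coeffNorm_C (a : ℝ) : coeffNorm (C a : MvPolynomial σ ℝ) = |a| :=
  coeffNorm_monomial 0 a

theorem coeffNorm_X_pow (j : σ) (k : ℕ) : coeffNorm (X j ^ k : MvPolynomial σ ℝ) = 1 := by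
  rw [X_pow_eq_monomial, coeffNorm_monomial, abs_one]

theorem coeffNorm_add_le (p q : MvPolynomial σ ℝ) :
    coeffNorm (p + q) ≤ coeffNorm p + coeffNorm q := by
  classical
  rw [coeffNorm_eq_sum_of_support_subset support_add,
    coeffNorm_eq_sum_of_support_subset (p := p) Finset.subset_union_left,
    coeffNorm_eq_sum_of_support_subset (p := q) Finset.subset_union_right,
    ← Finset.sum_add_distrib]
  exact Finset.sum_le_sum fun d _ ↦ (coeff_add d p q).symm ▸ abs_add_le _ _

theorem coeffNorm_sub_le (p q : MvPolynomial σ ℝ) :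
    coeffNorm (p - q) ≤ coeffNorm p + coeffNorm q := by
  simpa only [sub_eq_add_neg, coeffNorm_neg] using coeffNorm_add_le p (-q)

theorem coeffNorm_sum_le (s : Finset ι) (p : ι → MvPolynomial σ ℝ) :
    coeffNorm (∑ j ∈ s, p j) ≤ ∑ j ∈ s, coeffNorm (p j) :=
  Finset.le_sum_of_subadditive coeffNorm (by simp [coeffNorm]) coeffNorm_add_le s p

theorem coeffNorm_mul_le (p q : MvPolynomial σ ℝ) :
    coeffNorm (p * q) ≤ coeffNorm p * coeffNorm q := by
  have hmul : p * q = ∑ d ∈ p.support, ∑ e ∈ q.support,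
      monomial (d + e) (p.coeff d * q.coeff e) := mul_def ..
  calc coeffNorm (p * q)
      ≤ ∑ d ∈ p.support, ∑ e ∈ q.support, coeffNorm (monomial (d + e) (p.coeff d * q.coeff e)) :=
        hmul ▸ (coeffNorm_sum_le _ _).trans (Finset.sum_le_sum fun _ _ ↦ coeffNorm_sum_le _ _)
    _ = coeffNorm p * coeffNorm q := by
        simp only [coeffNorm_monomial, abs_mul]
        rw [coeffNorm, coeffNorm, Finset.sum_mul_sum]

end CoeffNorm

section PolyGaussian

variable {n : ℕ}

/-- The function `p(x) e^{-‖x‖²/2}` on `ℝⁿ` attached to a real polynomial `p`. -/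
def polyGaussian (p : MvPolynomial (Fin n) ℝ) (x : EuclideanSpace ℝ (Fin n)) : ℝ :=
  eval (fun j ↦ x j) p * Real.exp (-‖x‖ ^ 2 / 2)

theorem polyGaussian_eq_sum (p : MvPolynomial (Fin n) ℝ) (x : EuclideanSpace ℝ (Fin n)) :
    polyGaussian p x =
      ∑ d ∈ p.support, p.coeff d * ∏ l, (x l ^ d l * Real.exp (-x l ^ 2 / 2)) := by
  have hexp : Real.exp (-‖x‖ ^ 2 / 2) = ∏ l, Real.exp (-x l ^ 2 / 2) := by
    rw [EuclideanSpace.real_norm_sq_eq, ← Real.exp_sum, ← Finset.sum_div, Finset.sum_neg_distrib]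
  simp only [polyGaussian, eval_eq', hexp, Finset.sum_mul, Finset.prod_mul_distrib, mul_assoc]

theorem contDiff_polyGaussian (p : MvPolynomial (Fin n) ℝ) : ContDiff ℝ 1 (polyGaussian p) := by
  unfold polyGaussian
  simp only [eval_eq', EuclideanSpace.real_norm_sq_eq]
  fun_prop

theorem integrable_prod_pow_mul_exp (d : Fin n → ℕ) :
    Integrable fun x : EuclideanSpace ℝ (Fin n) ↦
      ∏ l, (x l ^ d l * Real.exp (-x l ^ 2 / 2)) := by
  rw [← (PiLp.volume_preserving_toLp (Fin n)).integrable_comp_emb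
    (MeasurableEquiv.toLp 2 _).measurableEmbedding]
  exact Integrable.fintype_prod (f := fun l (t : ℝ) ↦ t ^ d l * Real.exp (-t ^ 2 / 2))
    fun l ↦ integrable_pow_mul_exp_neg_sq_div_two _

theorem integrable_polyGaussian (p : MvPolynomial (Fin n) ℝ) : Integrable (polyGaussian p) := by
  simp only [funext (polyGaussian_eq_sum p)]
  exact integrable_finsetSum _ fun d _ ↦ (integrable_prod_pow_mul_exp d).const_mul _

theorem Fn_polyGaussian (p : MvPolynomial (Fin n) ℝ) (ξ : EuclideanSpace ℝ (Fin n)) :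
    Fn (fun x ↦ (polyGaussian p x : ℂ)) ξ =
      ∑ d ∈ p.support, p.coeff d * ∏ l, gaussianMoment (d l) (ξ l) := by
  have hterm (d : Fin n →₀ ℕ) :
      Integrable fun x : EuclideanSpace ℝ (Fin n) ↦ Complex.exp (-Complex.I * (⟪x, ξ⟫ : ℝ)) *
        (p.coeff d * ((∏ l, (x l ^ d l * Real.exp (-x l ^ 2 / 2)) : ℝ) : ℂ)) :=
    integrable_exp_inner_mul ((integrable_prod_pow_mul_exp d).ofReal.const_mul _) ξ
  simp only [Fn, polyGaussian_eq_sum, Complex.ofReal_sum, Complex.ofReal_mul (p.coeff _),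
    Finset.mul_sum]
  rw [integral_finsetSum _ fun d _ ↦ hterm d]
  refine Finset.sum_congr rfl fun d _ ↦ ?_
  simp only [mul_left_comm _ ((p.coeff d : ℝ) : ℂ), integral_const_mul, Complex.ofReal_prod]
  exact congrArg _ (Fn_prod (fun l t ↦ ((t ^ d l * Real.exp (-t ^ 2 / 2) : ℝ) : ℂ)) ξ)

theorem norm_prod_gaussianMoment_le {N : ℕ} (d : Fin n → ℕ) (hd : ∑ l, d l ≤ N)
    (ξ : EuclideanSpace ℝ (Fin n)) :
    ‖∏ l, gaussianMoment (d l) (ξ l)‖ ≤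
      √(2 * Real.pi) ^ n * Real.exp (-‖ξ‖ ^ 2 / 2) * (1 + √N + ‖ξ‖) ^ N := by
  have hle (l : Fin n) : d l ≤ N :=
    (Finset.single_le_sum (fun _ _ ↦ Nat.zero_le _) (Finset.mem_univ l)).trans hd
  have hcoord (l : Fin n) : |ξ l| + √N ≤ 1 + √N + ‖ξ‖ := by
    have : |ξ l| ≤ ‖ξ‖ := PiLp.norm_apply_le ξ l
    linarith
  calc ‖∏ l, gaussianMoment (d l) (ξ l)‖
      ≤ ∏ l, (√(2 * Real.pi) * Real.exp (-ξ l ^ 2 / 2) * (1 + √N + ‖ξ‖) ^ d l) := by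
        rw [norm_prod]
        refine Finset.prod_le_prod (fun _ _ ↦ norm_nonneg _) fun l _ ↦
          (norm_gaussianMoment_le (hle l) (ξ l)).trans ?_
        gcongr _ * ?_ ^ _
        exact hcoord l
    _ = √(2 * Real.pi) ^ n * Real.exp (-‖ξ‖ ^ 2 / 2) * (1 + √N + ‖ξ‖) ^ ∑ l, d l := by
        rw [Finset.prod_mul_distrib, Finset.prod_mul_distrib, Finset.prod_const,
          Finset.card_univ, Fintype.card_fin, ← Real.exp_sum, ← Finset.sum_div,
          Finset.sum_neg_distrib, ← EuclideanSpace.real_norm_sq_eq, Finset.prod_pow_eq_pow_sum]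
    _ ≤ √(2 * Real.pi) ^ n * Real.exp (-‖ξ‖ ^ 2 / 2) * (1 + √N + ‖ξ‖) ^ N := by
        gcongr
        linarith [Real.sqrt_nonneg N, norm_nonneg ξ]

theorem norm_Fn_polyGaussian_le {p : MvPolynomial (Fin n) ℝ} {N : ℕ} (hp : p.totalDegree ≤ N)
    (ξ : EuclideanSpace ℝ (Fin n)) :
    ‖Fn (fun x ↦ (polyGaussian p x : ℂ)) ξ‖ ≤
      coeffNorm p * (√(2 * Real.pi) ^ n * Real.exp (-‖ξ‖ ^ 2 / 2) * (1 + √N + ‖ξ‖) ^ N) := by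
  rw [Fn_polyGaussian, coeffNorm, Finset.sum_mul]
  refine norm_sum_le_of_le _ fun d hd ↦ ?_
  rw [norm_mul, Complex.norm_real, Real.norm_eq_abs]
  gcongr
  refine norm_prod_gaussianMoment_le d ?_ ξ
  rw [← Finsupp.sum_fintype d (fun _ e ↦ e) fun _ ↦ rfl]
  exact (le_totalDegree hd).trans hp

theorem norm_Fn_polyGaussian_mul_one_add_norm_le {p : MvPolynomial (Fin n) ℝ} {N : ℕ}
    (hp : p.totalDegree ≤ N) {ξ : EuclideanSpace ℝ (Fin n)} {B : ℝ}
    (hB : ‖ξ‖ - ‖ξ‖ ^ 2 / 4 ≤ B) :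
    ‖Fn (fun x ↦ (polyGaussian p x : ℂ)) ξ‖ * (1 + ‖ξ‖) ≤
      coeffNorm p * √(2 * Real.pi) ^ n * (N + 1)! * Real.exp (1 + √N + B) *
        Real.exp (-(1 / 4) * ‖ξ‖ ^ 2) := by
  set M := 1 + √N + ‖ξ‖
  have hM : M ^ (N + 1) ≤ (N + 1)! * Real.exp M := by
    rw [← div_le_iff₀' (by positivity)]
    exact Real.pow_div_factorial_le_exp M (by positivity) _
  have hone : 1 + ‖ξ‖ ≤ M := by
    have := Real.sqrt_nonneg N
    linarith
  have hC : 0 ≤ coeffNorm p := coeffNorm_nonneg p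
  calc ‖Fn (fun x ↦ (polyGaussian p x : ℂ)) ξ‖ * (1 + ‖ξ‖)
      ≤ coeffNorm p * (√(2 * Real.pi) ^ n * Real.exp (-‖ξ‖ ^ 2 / 2) * M ^ N) * M := by
        gcongr
        exact norm_Fn_polyGaussian_le hp ξ
    _ = coeffNorm p * √(2 * Real.pi) ^ n * Real.exp (-‖ξ‖ ^ 2 / 2) * M ^ (N + 1) := by ring
    _ ≤ coeffNorm p * √(2 * Real.pi) ^ n * Real.exp (-‖ξ‖ ^ 2 / 2) *
          ((N + 1)! * Real.exp M) := by gcongr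
    _ = coeffNorm p * √(2 * Real.pi) ^ n * (N + 1)! *
          Real.exp (1 + √N + (‖ξ‖ - ‖ξ‖ ^ 2 / 4)) * Real.exp (-(1 / 4) * ‖ξ‖ ^ 2) := by
        rw [mul_assoc _ (Real.exp (1 + √N + _)), ← Real.exp_add, mul_mul_mul_comm,
          ← Real.exp_add]
        congr 2
        ring
    _ ≤ _ := by gcongr

theorem integrable_Fn_polyGaussian (p : MvPolynomial (Fin n) ℝ) :
    Integrable (Fn fun x ↦ (polyGaussian p x : ℂ)) := by
  have hcont := continuous_Fn (integrable_polyGaussian p).ofReal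
  refine integrable_of_norm_mul_one_add_norm_le hcont.aestronglyMeasurable
    ((integrable_exp_neg_mul_sq_norm (b := 1 / 4) (by norm_num)).const_mul _) fun ξ ↦
    norm_Fn_polyGaussian_mul_one_add_norm_le (B := 1) le_rfl ?_
  linarith [sq_nonneg (‖ξ‖ / 2 - 1)]

theorem norm_sub_one_mul_Fn_polyGaussian_le {p : MvPolynomial (Fin n) ℝ} {N : ℕ}
    (hp : p.totalDegree ≤ N) {R : ℝ} (hR : 2 ≤ R) {m : EuclideanSpace ℝ (Fin n) → ℂ}
    (hm1 : ∀ ξ, ‖m ξ - 1‖ ≤ 1) (hmR : ∀ ξ, ‖ξ‖ ≤ R → m ξ = 1) (ξ : EuclideanSpace ℝ (Fin n)) :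
    ‖(m ξ - 1) * Fn (fun x ↦ (polyGaussian p x : ℂ)) ξ‖ * (1 + ‖ξ‖) ≤
      coeffNorm p * √(2 * Real.pi) ^ n * (N + 1)! * Real.exp (1 + √N + (R - R ^ 2 / 4)) *
        Real.exp (-(1 / 4) * ‖ξ‖ ^ 2) := by
  rcases le_or_gt ‖ξ‖ R with hξ | hξ
  · rw [hmR ξ hξ, sub_self, zero_mul, norm_zero, zero_mul]
    have := coeffNorm_nonneg p
    positivity
  · have hB : ‖ξ‖ - ‖ξ‖ ^ 2 / 4 ≤ R - R ^ 2 / 4 := by nlinarith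
    refine le_trans ?_ (norm_Fn_polyGaussian_mul_one_add_norm_le hp hB)
    rw [norm_mul]
    gcongr
    exact mul_le_of_le_one_left (norm_nonneg _) (hm1 ξ)

theorem exists_FnInv_mul_Fn_polyGaussian_eq_add {p : MvPolynomial (Fin n) ℝ} {N : ℕ}
    (hp : p.totalDegree ≤ N) {R : ℝ} (hR : 2 ≤ R) {m : EuclideanSpace ℝ (Fin n) → ℂ}
    (hm : AEStronglyMeasurable m) (hm1 : ∀ ξ, ‖m ξ - 1‖ ≤ 1) (hmR : ∀ ξ, ‖ξ‖ ≤ R → m ξ = 1) :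
    ∃ δ : EuclideanSpace ℝ (Fin n) → ℂ, Differentiable ℝ δ ∧
      (FnInv fun ξ ↦ m ξ * Fn (fun x ↦ (polyGaussian p x : ℂ)) ξ) =
        (fun x ↦ (polyGaussian p x : ℂ)) + δ ∧
      ∀ z, max ‖δ z‖ ‖fderiv ℝ δ z‖ ≤
        coeffNorm p * √2 ^ n * (N + 1)! * Real.exp (1 + √N + (R - R ^ 2 / 4)) := by
  set f : EuclideanSpace ℝ (Fin n) → ℂ := fun x ↦ (polyGaussian p x : ℂ)
  have hf : Integrable f := (integrable_polyGaussian p).ofReal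
  have hfc : Continuous f := Complex.continuous_ofReal.comp (contDiff_polyGaussian p).continuous
  set g : EuclideanSpace ℝ (Fin n) → ℂ := fun ξ ↦ (m ξ - 1) * Fn f ξ
  have hg : AEStronglyMeasurable g :=
    (hm.sub aestronglyMeasurable_const).mul (continuous_Fn hf).aestronglyMeasurable
  have hW := (integrable_exp_neg_mul_sq_norm (V := EuclideanSpace ℝ (Fin n)) (b := 1 / 4)
    (by norm_num)).const_mul (coeffNorm p * √(2 * Real.pi) ^ n * (N + 1)! *
      Real.exp (1 + √N + (R - R ^ 2 / 4)))
  have hgW := norm_sub_one_mul_Fn_polyGaussian_le hp hR hm1 hmR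
  have hgi : Integrable g := integrable_of_norm_mul_one_add_norm_le hg hW hgW
  have hpi : √(2 * Real.pi) ^ n * √(2 * Real.pi) ^ n = (2 * Real.pi) ^ n := by
    rw [← mul_pow, Real.mul_self_sqrt (by positivity)]
  refine ⟨FnInv g,
    differentiable_FnInv hgi (integrable_norm_mul_of_norm_mul_one_add_norm_le hg hW hgW),
    FnInv_mul_Fn hfc hf (integrable_Fn_polyGaussian p) hgi, fun z ↦ ?_⟩
  refine (max_le (norm_FnInv_le_of_weight hW hgW z)
    (norm_fderiv_FnInv_le_of_weight hg hW hgW z)).trans_eq ?_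
  rw [integral_const_mul, integral_exp_neg_quarter_sq_norm, ← hpi]
  field_simp

end PolyGaussian

section QuarticGaussian

variable {n : ℕ}

/-- The polynomial `(‖x‖² - 2)² + ‖y‖² - 1` on `ℝⁿ`, where `x` collects the coordinates indexed
by `A` and `y` the remaining ones. -/
def quarticPoly (A : Finset (Fin n)) : MvPolynomial (Fin n) ℝ :=
  (∑ j ∈ A, X j ^ 2 - C 2) ^ 2 + ∑ j ∈ Aᶜ, X j ^ 2 - C 1

theorem polyGaussian_quarticPoly (A : Finset (Fin n)) :
    polyGaussian (quarticPoly A) = fun x : EuclideanSpace ℝ (Fin n) ↦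
      ((∑ j ∈ A, x j ^ 2 - 2) ^ 2 + ∑ j ∈ Aᶜ, x j ^ 2 - 1) * Real.exp (-‖x‖ ^ 2 / 2) := by
  ext x
  simp only [polyGaussian, quarticPoly, map_sub, map_add, map_pow, map_sum, eval_X, eval_C]

theorem totalDegree_quarticPoly_le (A : Finset (Fin n)) : (quarticPoly A).totalDegree ≤ 4 := by
  have hsum (B : Finset (Fin n)) :
      (∑ j ∈ B, X j ^ 2 : MvPolynomial (Fin n) ℝ).totalDegree ≤ 2 :=
    totalDegree_finsetSum_le fun j _ ↦ (totalDegree_X_pow j 2).le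
  have hsub : (∑ j ∈ A, X j ^ 2 - C 2 : MvPolynomial (Fin n) ℝ).totalDegree ≤ 2 :=
    (totalDegree_sub_C_le _ _).trans (hsum A)
  refine (totalDegree_sub_C_le _ _).trans ((totalDegree_add _ _).trans (max_le ?_ ?_))
  · exact (totalDegree_pow _ _).trans (Nat.mul_le_mul_left 2 hsub)
  · exact (hsum _).trans (by norm_num)

theorem coeffNorm_sum_X_sq_le (B : Finset (Fin n)) :
    coeffNorm (∑ j ∈ B, X j ^ 2 : MvPolynomial (Fin n) ℝ) ≤ n := by
  calc coeffNorm (∑ j ∈ B, X j ^ 2 : MvPolynomial (Fin n) ℝ)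
      ≤ ∑ j ∈ B, coeffNorm (X j ^ 2 : MvPolynomial (Fin n) ℝ) := coeffNorm_sum_le _ _
    _ = B.card := by simp only [coeffNorm_X_pow, Finset.sum_const, nsmul_eq_mul, mul_one]
    _ ≤ n := by exact_mod_cast card_finset_fin_le B

theorem coeffNorm_quarticPoly_le (hn : 1 ≤ n) (A : Finset (Fin n)) :
    coeffNorm (quarticPoly A) ≤ 11 * (n : ℝ) ^ 2 := by
  have hn' : (1 : ℝ) ≤ n := by exact_mod_cast hn
  have hsub : coeffNorm (∑ j ∈ A, X j ^ 2 - C 2 : MvPolynomial (Fin n) ℝ) ≤ n + 2 := by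
    refine (coeffNorm_sub_le _ _).trans (add_le_add (coeffNorm_sum_X_sq_le A) ?_)
    rw [coeffNorm_C, abs_of_nonneg zero_le_two]
  calc coeffNorm (quarticPoly A)
      ≤ coeffNorm ((∑ j ∈ A, X j ^ 2 - C 2 : MvPolynomial (Fin n) ℝ) ^ 2) +
          coeffNorm (∑ j ∈ Aᶜ, X j ^ 2 : MvPolynomial (Fin n) ℝ) +
          coeffNorm (C 1 : MvPolynomial (Fin n) ℝ) :=
        (coeffNorm_sub_le _ _).trans (add_le_add_left (coeffNorm_add_le _ _) _)
    _ ≤ (n + 2) * (n + 2) + n + 1 := by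
        rw [sq, coeffNorm_C, abs_one]
        gcongr
        · exact (coeffNorm_mul_le _ _).trans
            (mul_le_mul hsub hsub (coeffNorm_nonneg _) (by positivity))
        · exact coeffNorm_sum_X_sq_le _
    _ ≤ 11 * (n : ℝ) ^ 2 := by nlinarith

theorem quartic_truncation_constant_le (hn : 1 ≤ n) :
    11 * (n : ℝ) ^ 2 * √2 ^ n * (4 + 1)! * Real.exp (1 + √(4 : ℕ) + (24 * n - (24 * n) ^ 2 / 4)) ≤
      36 * Real.exp (-72 * (n : ℝ) ^ 2) := by
  have hn' : (1 : ℝ) ≤ n := by exact_mod_cast hn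
  have hsqrt4 : √((4 : ℕ) : ℝ) = 2 := by
    rw [Real.sqrt_eq_iff_mul_self_eq_of_pos two_pos]; norm_num
  have hsq : (n : ℝ) ^ 2 ≤ Real.exp ((n : ℝ) ^ 2) := by
    linarith [Real.add_one_le_exp ((n : ℝ) ^ 2)]
  have hsqrt2 : √2 ^ n ≤ Real.exp n := by
    rw [← mul_one (n : ℝ), Real.exp_nat_mul]
    gcongr
    have : √2 ≤ 2 := Real.sqrt_le_left two_pos.le |>.mpr (by norm_num)
    linarith [Real.add_one_le_exp (1 : ℝ)]
  have hconst : (37 : ℝ) ≤ Real.exp 6 := by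
    have := Real.add_one_le_exp (1 : ℝ)
    calc (37 : ℝ) ≤ 2 ^ 6 := by norm_num
      _ ≤ Real.exp 1 ^ 6 := by gcongr; linarith
      _ = Real.exp 6 := by rw [← Real.exp_nat_mul]; norm_num
  calc _ = 36 * ((110 / 3) * (n : ℝ) ^ 2 * √2 ^ n * Real.exp (3 + 24 * n - 144 * n ^ 2)) := by
        rw [hsqrt4]
        norm_num [Nat.factorial]
        ring_nf
    _ ≤ 36 * (Real.exp 6 * Real.exp ((n : ℝ) ^ 2) * Real.exp n *
          Real.exp (3 + 24 * n - 144 * n ^ 2)) := by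
        gcongr
        linarith
    _ = 36 * Real.exp (9 + 25 * n - 143 * n ^ 2) := by
        rw [← Real.exp_add, ← Real.exp_add, ← Real.exp_add]
        ring_nf
    _ ≤ 36 * Real.exp (-72 * (n : ℝ) ^ 2) := by
        gcongr
        nlinarith

end QuarticGaussian

section Rescaling

variable {V : Type*} [NormedAddCommGroup V] [NormedSpace ℝ V]

theorem fderiv_ofReal_add_comp_smul_apply {f : V → ℝ} {δ : V → ℂ} (hf : Differentiable ℝ f)
    (hδ : Differentiable ℝ δ) (η : ℝ) (x v : V) :
    fderiv ℝ (fun y ↦ (f (η • y) : ℂ) + δ (η • y)) x v =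
      ((η * fderiv ℝ f (η • x) v : ℝ) : ℂ) + η * fderiv ℝ δ (η • x) v := by
  have hsum : HasFDerivAt (fun y ↦ (f y : ℂ) + δ y)
      (Complex.ofRealCLM ∘L fderiv ℝ f (η • x) + fderiv ℝ δ (η • x)) (η • x) :=
    (Complex.ofRealCLM.hasFDerivAt.comp _ (hf _).hasFDerivAt).add (hδ _).hasFDerivAt
  rw [fderiv_comp_smul (f := fun y ↦ (f y : ℂ) + δ y), hsum.fderiv]
  simp

end Rescaling

theorem stmt17_general {n : ℕ} (hn : 1 ≤ n) (A : Finset (Fin n)) {c η : ℝ} (hη : 0 < η)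
    (hηc : η ≤ c / (48 * n)) {χ : EuclideanSpace ℝ (Fin n) → ℝ} (hχ : Measurable χ)
    (hχ02 : ∀ ξ, χ ξ ∈ Set.Icc (0 : ℝ) 2)
    (hχ1 : ∀ ξ ∈ Metric.closedBall (0 : EuclideanSpace ℝ (Fin n)) (c / 2), χ ξ = 1)
    {q : EuclideanSpace ℝ (Fin n) → ℝ} (hq : q = polyGaussian (quarticPoly A))
    {qc : EuclideanSpace ℝ (Fin n) → ℂ}
    (hqc : qc = fun x ↦ FnInv (fun ξ ↦ (χ (η • ξ) : ℂ) * Fn (fun y ↦ (q y : ℂ)) ξ) (η • x)) :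
    (∀ x, ‖qc x - (q (η • x) : ℂ)‖ ≤ 36 * Real.exp (-72 * (n : ℝ) ^ 2)) ∧
      ∀ x v, ‖fderiv ℝ qc x v - ((η * fderiv ℝ q (η • x) v : ℝ) : ℂ)‖ ≤
        36 * η * Real.exp (-72 * (n : ℝ) ^ 2) * ‖v‖ := by
  have hn' : (1 : ℝ) ≤ n := by exact_mod_cast hn
  have hχnorm (ξ : EuclideanSpace ℝ (Fin n)) : ‖(χ ξ : ℂ) - 1‖ ≤ 1 := by
    rw [← Complex.ofReal_one, ← Complex.ofReal_sub, Complex.norm_real, Real.norm_eq_abs, abs_le]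
    constructor <;> linarith [(hχ02 ξ).1, (hχ02 ξ).2]
  have hχR (ξ : EuclideanSpace ℝ (Fin n)) (hξ : ‖ξ‖ ≤ 24 * n) : (χ (η • ξ) : ℂ) = 1 := by
    rw [le_div_iff₀ (by positivity)] at hηc
    have hmem : η • ξ ∈ Metric.closedBall (0 : EuclideanSpace ℝ (Fin n)) (c / 2) := by
      rw [mem_closedBall_zero_iff, norm_smul, Real.norm_of_nonneg hη.le]
      nlinarith
    rw [hχ1 _ hmem, Complex.ofReal_one]
  obtain ⟨δ, hδ, hqδ, hδε⟩ := exists_FnInv_mul_Fn_polyGaussian_eq_add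
    (totalDegree_quarticPoly_le A) (R := 24 * n) (by linarith)
    (m := fun ξ ↦ (χ (η • ξ) : ℂ))
    (Complex.measurable_ofReal.comp (hχ.comp (measurable_const_smul η))).aestronglyMeasurable
    (fun ξ ↦ hχnorm (η • ξ)) hχR
  have hε (z : EuclideanSpace ℝ (Fin n)) :
      max ‖δ z‖ ‖fderiv ℝ δ z‖ ≤ 36 * Real.exp (-72 * (n : ℝ) ^ 2) := by
    refine (hδε z).trans (le_trans ?_ (quartic_truncation_constant_le hn))
    gcongr
    exact coeffNorm_quarticPoly_le hn A
  have hqd : Differentiable ℝ q := hq ▸ (contDiff_polyGaussian _).differentiable one_ne_zero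
  have hqc' : qc = fun x ↦ (q (η • x) : ℂ) + δ (η • x) := by
    rw [hqc, hq, hqδ]
    rfl
  refine ⟨fun x ↦ ?_, fun x v ↦ ?_⟩
  · rw [hqc', add_sub_cancel_left]
    exact (le_max_left _ _).trans (hε _)
  · rw [hqc', fderiv_ofReal_add_comp_smul_apply hqd hδ, add_sub_cancel_left, norm_mul,
      Complex.norm_real, Real.norm_of_nonneg hη.le]
    calc η * ‖fderiv ℝ δ (η • x) v‖
        ≤ η * (36 * Real.exp (-72 * (n : ℝ) ^ 2) * ‖v‖) := by
          gcongr
          exact ContinuousLinearMap.le_of_opNorm_le _ ((le_max_right _ _).trans (hε _)) v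
      _ = 36 * η * Real.exp (-72 * (n : ℝ) ^ 2) * ‖v‖ := by ring

/-- with `0 < η ≤ c/(48n)`, the rescaled frequency-truncated approximation
`q_{i,c}(x) = q^c_η(ηx)` of `q_i = Q_i e^{-‖x‖²/2}` satisfies
`‖q_{i,c} − q_i(η·)‖_∞ ≤ 36 e^{−72n²}` and
`‖∂_k q_{i,c} − η(∂_k q_i)(η·)‖_∞ ≤ 36 η e^{−72n²}`. -/
theorem stmt17 (n i : ℕ) (hn : 1 ≤ n) (hi : i < n)
    (c η : ℝ) (hc : 0 < c) (hη : 0 < η) (hηc : η ≤ c / (48 * n))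
    (χ : EuclideanSpace ℝ (Fin n) → ℝ) (hχ : ContDiff ℝ (⊤ : ℕ∞) χ)
    (hχ01 : ∀ ξ, χ ξ ∈ Set.Icc (0:ℝ) 1)
    (hχsupp : tsupport χ ⊆ Metric.closedBall 0 c)
    (hχ1 : ∀ ξ ∈ Metric.closedBall (0 : EuclideanSpace ℝ (Fin n)) (c / 2), χ ξ = 1)
    (q : EuclideanSpace ℝ (Fin n) → ℝ)
    (hq : q = fun p =>
      (((∑ j ∈ Finset.univ.filter (fun j : Fin n => (j : ℕ) < i + 1), p j ^ 2) - 2) ^ 2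
        + (∑ j ∈ Finset.univ.filter (fun j : Fin n => i + 1 ≤ (j : ℕ)), p j ^ 2) - 1) *
        Real.exp (-‖p‖ ^ 2 / 2))
    (qcη qic : EuclideanSpace ℝ (Fin n) → ℂ)
    (hqcη : qcη = fun z => (1 / (2 * Real.pi) ^ n) *
      ∫ ξ : EuclideanSpace ℝ (Fin n),
        (χ (η • ξ) : ℂ) * Fn (fun y => (q y : ℂ)) ξ * Complex.exp (Complex.I * (⟪z, ξ⟫ : ℝ)))
    (hqic : qic = fun x => qcη (η • x)) :
    (∀ x, ‖qic x - (q (η • x) : ℂ)‖ ≤ 36 * Real.exp (-72 * (n : ℝ) ^ 2)) ∧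
    (∀ (k : Fin n) (x : EuclideanSpace ℝ (Fin n)),
      ‖fderiv ℝ qic x (EuclideanSpace.single k 1)
          - ((η * fderiv ℝ q (η • x) (EuclideanSpace.single k 1) : ℝ) : ℂ)‖
        ≤ 36 * η * Real.exp (-72 * (n : ℝ) ^ 2)) := by
  have h := stmt17_general hn {j | (j : ℕ) < i + 1} hη hηc hχ.continuous.measurable
    (fun ξ ↦ Set.Icc_subset_Icc_right one_le_two (hχ01 ξ)) hχ1
    (hq.trans (by simp [polyGaussian_quarticPoly, Finset.compl_filter])) (hqic.trans (hqcη ▸ rfl))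
  exact ⟨h.1, fun k x ↦ by simpa using h.2 x (EuclideanSpace.single k 1)⟩

end
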